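/- For a monic p-Eisenstein polynomial f ∈ ℤ[x] of degree n with root α generating K = ℚ(α): if n ≢ 0 (mod p) then p^{n−1} exactly divides Δ(K), and if n ≡ 0 (mod p) then p^n divides Δ(K). -/

import Mathlib

open Polynomial

/-!
Let `f` be Eisenstein at a prime `π` and write `f(0) = π m` with `π ∤ m`. As `π` divides the
nonleading coefficients of `f`, Euler's relation takes the form `X f' = n f + π g` with
`g(0) = -n m`, so taking resultants with `f` gives `± π m · disc f = π ^ n · Res(f, g)`. Modulo `π`
we have `f = X ^ n`, hence `Res(f, g) ≡ g(0) ^ n = (-n m) ^ n`. Thus `π ^ (n - 1)` always divides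
`disc f`, and `π ^ n` does exactly when `π ∣ n`.

This passes to `K = ℚ(a)`, with `a` a root of `f` and `π = p`, because taking norms in
`conductor · different = (f'(a))` yields `N(conductor) · |Δ(K)| = |disc f|`, and `N(conductor)` is
prime to `p`: if `p ^ r m` lies in the conductor, then so does `m`, since `f` is Eisenstein at `p`.
-/

section Resultant

variable {R : Type*} [CommRing R] {f : R[X]}

lemma resultant_of_natDegree_le (hf : f.Monic) {g : R[X]} {k : ℕ} (hg : g.natDegree ≤ k) :
    resultant f g f.natDegree k = resultant f g := by
  obtain ⟨d, rfl⟩ := Nat.exists_eq_add_of_le hg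
  rw [resultant_add_right_deg _ _ _ _ _ le_rfl, hf.coeff_natDegree, one_pow, one_mul]

lemma resultant_mul_of_monic (hf : f.Monic) (g h : R[X]) :
    resultant f (g * h) = resultant f g * resultant f h := by
  rw [← resultant_of_natDegree_le hf natDegree_mul_le, resultant_mul_right _ _ _ _ le_rfl]

lemma resultant_add_mul_of_monic (hf : f.Monic) (g q : R[X]) :
    resultant f (g + f * q) = resultant f g := by
  obtain ⟨k, hg, hq⟩ : ∃ k, g.natDegree ≤ k ∧ q.natDegree + f.natDegree ≤ k :=
    ⟨_, le_max_left _ _, le_max_right _ _⟩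
  have hfq : (f * q).natDegree ≤ k := natDegree_mul_le.trans (by omega)
  rw [← resultant_of_natDegree_le hf (natDegree_add_le_of_le hg hfq |>.trans_eq (max_self k)),
    resultant_add_mul_right f g q _ k hq le_rfl, resultant_of_natDegree_le hf hg]

lemma resultant_X_sub_C_of_monic (hf : f.Monic) (r : R) :
    resultant f (X - C r) = (-1) ^ f.natDegree * f.eval r := by
  rw [← resultant_of_natDegree_le hf (natDegree_X_sub_C_le r),
    resultant_X_sub_C_right _ _ _ le_rfl]

lemma resultant_map_of_monic {S : Type*} [CommRing S] (hf : f.Monic) (φ : R →+* S) (g : R[X]) :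
    resultant (f.map φ) (g.map φ) = φ (resultant f g) := by
  nontriviality S
  rw [← resultant_of_natDegree_le (hf.map φ) natDegree_map_le, hf.natDegree_map,
    resultant_map_map]

lemma resultant_derivative_of_monic (hf : f.Monic) :
    resultant f f.derivative =
      (-1) ^ (f.natDegree * (f.natDegree - 1) / 2) * f.discr := by
  rcases f.natDegree.eq_zero_or_pos with h0 | hpos
  · obtain rfl := hf.natDegree_eq_zero.1 h0
    have h1 : discr (1 : R[X]) = 1 := discr_C 1
    simp [h1]
  · rw [← resultant_of_natDegree_le hf (natDegree_derivative_le f),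
      resultant_deriv (natDegree_pos_iff_degree_pos.1 hpos), hf.leadingCoeff, mul_one]

lemma resultant_sub_coeff_zero_pow_mem {I : Ideal R} (hf : f.IsDistinguishedAt I) (g : R[X]) :
    resultant f g - g.coeff 0 ^ f.natDegree ∈ I := by
  rw [← Ideal.Quotient.mk_eq_mk_iff_sub_mem, ← resultant_map_map, hf.map_eq_X_pow,
    resultant_X_pow_left _ _ _ natDegree_map_le, coeff_map, map_pow]

end Resultant

section Norm

variable {ι : Type*} [Fintype ι] [DecidableEq ι]

lemma map_det_aeval {R S : Type*} [CommRing R] [CommRing S] (φ : R →+* S) (M : Matrix ι ι R)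
    (g : R[X]) : (aeval (M.map φ) (g.map φ)).det = φ (aeval M g).det := by
  have hscalar : (algebraMap S (Matrix ι ι S)).comp φ =
      φ.mapMatrix.comp (algebraMap R (Matrix ι ι R)) := by
    ext1 r
    simp [Matrix.algebraMap_eq_diagonal, Matrix.diagonal_map, Pi.algebraMap_def]
  rw [RingHom.map_det, map_aeval_eq_aeval_map hscalar, RingHom.mapMatrix_apply]

lemma det_aeval_eq_resultant_of_splits {R : Type*} [CommRing R] (M : Matrix ι ι R) {g : R[X]}
    (hg : g.Splits) : (aeval M g).det = resultant M.charpoly g := by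
  nontriviality R
  have hM := M.charpoly_monic
  induction hg using Submonoid.closure_induction with
  | mem g hg =>
    rcases hg with ⟨a, rfl⟩ | ⟨a, rfl⟩
    · rw [aeval_C, Matrix.algebraMap_eq_diagonal, Matrix.det_diagonal]
      simp [M.charpoly_natDegree_eq_dim]
    · rw [← sub_neg_eq_add, ← C_neg, resultant_X_sub_C_of_monic hM, Matrix.eval_charpoly,
        M.charpoly_natDegree_eq_dim, ← Matrix.det_neg, neg_sub, aeval_sub, aeval_X, aeval_C]
      rfl
  | one => simp
  | mul g h _ _ hg hh =>
    rw [map_mul, Matrix.det_mul, hg, hh, resultant_mul_of_monic hM]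

lemma det_aeval_eq_resultant {R : Type*} [CommRing R] (M : Matrix ι ι R) (g : R[X]) :
    (aeval M g).det = resultant M.charpoly g := by
  induction g using induction_of_Splits_of_injective_of_surjective with
  | Splits R g hg => exact det_aeval_eq_resultant_of_splits M hg
  | injective R S φ hφ g ih =>
    apply hφ
    rw [← map_det_aeval, ih, Matrix.charpoly_map, resultant_map_of_monic M.charpoly_monic]
  | surjective R S φ hφ g ih =>
    obtain ⟨M, rfl⟩ : ∃ M' : Matrix ι ι R, M'.map φ = M := hφ.comp_left.comp_left M
    obtain ⟨g, rfl⟩ := Polynomial.map_surjective φ hφ g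
    rw [map_det_aeval, ih, Matrix.charpoly_map, resultant_map_of_monic M.charpoly_monic]

lemma norm_aeval_gen_eq_resultant {A B : Type*} [CommRing A] [CommRing B] [Algebra A B]
    (pb : PowerBasis A B) (g : A[X]) :
    Algebra.norm A (aeval pb.gen g) = resultant (minpoly A pb.gen) g := by
  rw [Algebra.norm_eq_matrix_det pb.basis, ← aeval_algHom_apply, det_aeval_eq_resultant,
    charpoly_leftMulMatrix]

end Norm

section Eisenstein

variable {R : Type*} [CommRing R] {f : R[X]} {π : R}

lemma exists_X_mul_derivative_eq (hf : f.IsWeaklyEisensteinAt (Ideal.span {π})) :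
    ∃ g : R[X], X * f.derivative = C π * g + f * C (f.natDegree : R) := by
  suffices h : C π ∣ X * f.derivative - f * C (f.natDegree : R) by
    obtain ⟨g, hg⟩ := h
    exact ⟨g, by rw [← hg, sub_add_cancel]⟩
  rw [C_dvd_iff_dvd_coeff]
  intro i
  have hcoeff : (X * f.derivative - f * C (f.natDegree : R)).coeff i =
      f.coeff i * (i - f.natDegree) := by
    cases i with
    | zero => simp
    | succ i =>
      rw [coeff_sub, coeff_X_mul, coeff_derivative, coeff_mul_C]
      push_cast
      ring
  rw [hcoeff]
  rcases lt_trichotomy i f.natDegree with hi | rfl | hi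
  · exact (Ideal.mem_span_singleton.1 (hf.mem hi)).mul_right _
  · simp
  · simp [coeff_eq_zero_of_natDegree_lt hi]

lemma exists_not_dvd_and_coeff_zero_eq_mul (hf : f.IsEisensteinAt (Ideal.span {π}))
    (hdeg : f.natDegree ≠ 0) : ∃ m, ¬ π ∣ m ∧ f.coeff 0 = π * m := by
  obtain ⟨m, hm⟩ := Ideal.mem_span_singleton.1 (hf.mem (Nat.pos_of_ne_zero hdeg))
  refine ⟨m, fun hdvd ↦ hf.notMem ?_, hm⟩
  rw [Ideal.span_singleton_pow, Ideal.mem_span_singleton, hm, sq]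
  exact mul_dvd_mul_left π hdvd

variable [IsDomain R]

lemma exists_mul_discr_eq (hπ : Prime π) (hmonic : f.Monic)
    (hf : f.IsEisensteinAt (Ideal.span {π})) (hdeg : f.natDegree ≠ 0) :
    ∃ u v : R, ¬ π ∣ u ∧ u * f.discr = π ^ (f.natDegree - 1) * v ∧
      (π ∣ v ↔ π ∣ (f.natDegree : R)) := by
  obtain ⟨m, hπm, hm⟩ := exists_not_dvd_and_coeff_zero_eq_mul hf hdeg
  obtain ⟨g, hg⟩ := exists_X_mul_derivative_eq hf.isWeaklyEisensteinAt
  have hg0 : g.coeff 0 = -(m * f.natDegree) := by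
    have h := congrArg (coeff · 0) hg
    simp only [mul_coeff_zero, coeff_X_zero, coeff_add, coeff_C_zero, hm, zero_mul] at h
    exact mul_left_cancel₀ hπ.ne_zero (by linear_combination -h)
  have hres : resultant f X * resultant f f.derivative = π ^ f.natDegree * resultant f g := by
    rw [← resultant_mul_of_monic hmonic, hg, resultant_add_mul_of_monic hmonic,
      resultant_mul_of_monic hmonic, resultant_C_right]
    simp
  have hX : resultant f X = (-1) ^ f.natDegree * (π * m) := by
    rw [← hm, coeff_zero_eq_eval_zero, ← resultant_X_sub_C_of_monic hmonic, C_0, sub_zero]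
  have hdvd_res : π ∣ resultant f g ↔ π ∣ (f.natDegree : R) := by
    have h := resultant_sub_coeff_zero_pow_mem ⟨hf.isWeaklyEisensteinAt, hmonic⟩ g
    rw [Ideal.mem_span_singleton] at h
    rw [dvd_iff_dvd_of_dvd_sub h, hπ.dvd_pow_iff_dvd hdeg, hg0, dvd_neg, hπ.dvd_mul,
      or_iff_right hπm]
  rw [hX, resultant_derivative_of_monic hmonic] at hres
  generalize f.natDegree * (f.natDegree - 1) / 2 = e at hres
  have hsign : ∀ k : ℕ, ¬ π ∣ (-1) ^ k := fun k h ↦ hπ.not_isUnit <|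
    isUnit_of_dvd_unit h (isUnit_one.neg.pow k)
  refine ⟨(-1) ^ f.natDegree * m * (-1) ^ e, resultant f g, ?_, ?_, hdvd_res⟩
  · rw [hπ.dvd_mul, hπ.dvd_mul]
    exact not_or.2 ⟨not_or.2 ⟨hsign _, hπm⟩, hsign _⟩
  · refine mul_left_cancel₀ hπ.ne_zero ?_
    rw [← mul_assoc π (π ^ _), mul_pow_sub_one hdeg, ← hres]
    ring

lemma pow_natDegree_sub_one_dvd_discr (hπ : Prime π) (hmonic : f.Monic)
    (hf : f.IsEisensteinAt (Ideal.span {π})) (hdeg : f.natDegree ≠ 0) :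
    π ^ (f.natDegree - 1) ∣ f.discr := by
  obtain ⟨u, v, hu, huv, -⟩ := exists_mul_discr_eq hπ hmonic hf hdeg
  exact hπ.pow_dvd_of_dvd_mul_left _ hu ⟨v, huv⟩

lemma pow_natDegree_dvd_discr_iff (hπ : Prime π) (hmonic : f.Monic)
    (hf : f.IsEisensteinAt (Ideal.span {π})) (hdeg : f.natDegree ≠ 0) :
    π ^ f.natDegree ∣ f.discr ↔ π ∣ (f.natDegree : R) := by
  obtain ⟨u, v, hu, huv, hv⟩ := exists_mul_discr_eq hπ hmonic hf hdeg
  calc π ^ f.natDegree ∣ f.discr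
      ↔ π ^ f.natDegree ∣ u * f.discr :=
        ⟨fun h ↦ h.mul_left u, hπ.pow_dvd_of_dvd_mul_left _ hu⟩
    _ ↔ π ^ (f.natDegree - 1) * π ∣ π ^ (f.natDegree - 1) * v := by
        rw [huv, pow_sub_one_mul hdeg]
    _ ↔ π ∣ v := mul_dvd_mul_iff_left (pow_ne_zero _ hπ.ne_zero)
    _ ↔ π ∣ (f.natDegree : R) := hv

end Eisenstein

lemma minpoly_eq_of_irreducible_of_monic {R S : Type*} [CommRing R] [CommRing S] [IsDomain R]
    [IsIntegrallyClosed R] [IsDomain S] [Algebra R S] [Module.IsTorsionFree R S] {f : R[X]} {s : S}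
    (hirr : Irreducible f) (hmonic : f.Monic) (hroot : aeval s f = 0) : minpoly R s = f := by
  have hint : IsIntegral R s := ⟨f, hmonic, hroot⟩
  exact eq_of_monic_of_associated (minpoly.monic hint) hmonic <|
    (minpoly.irreducible hint).associated_of_dvd hirr (minpoly.isIntegrallyClosed_dvd hint hroot)

section Conductor

variable {R S : Type*} [CommRing R] [CommRing S] [Algebra R S] {a : S}

lemma algebraMap_mem_adjoin_singleton_iff {A : Type*} [CommRing A] [Algebra R A] [Algebra S A]
    [IsScalarTower R S A] [FaithfulSMul S A] {z : S} :
    algebraMap S A z ∈ Algebra.adjoin R {algebraMap S A a} ↔ z ∈ Algebra.adjoin R {a} := by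
  rw [← Set.image_singleton, Algebra.adjoin_algebraMap, Subalgebra.mem_map]
  exact (FaithfulSMul.algebraMap_injective S A).mem_set_image

variable {K L : Type*} [Field K] [Field L] [IsDomain R] [IsIntegrallyClosed R]
  [Algebra R K] [IsFractionRing R K] [Algebra K L] [Algebra R L] [IsScalarTower R K L]
  [Algebra S L] [IsScalarTower R S L] [FaithfulSMul S L] [Algebra.IsIntegral R S] {π : R}

lemma mem_conductor_of_pow_mul_mem (hπ : Prime π)
    (hgen : Algebra.adjoin K {algebraMap S L a} = ⊤)
    (hf : (minpoly R a).IsEisensteinAt (Ideal.span {π})) {r : ℕ} {x : S}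
    (hx : algebraMap R S π ^ r * x ∈ conductor R a) : x ∈ conductor R a := by
  have hint (z : S) : IsIntegral R (algebraMap S L z) :=
    (Algebra.IsIntegral.isIntegral z).algebraMap
  obtain ⟨B, hB⟩ : ∃ B : PowerBasis K L, B.gen = algebraMap S L a :=
    ⟨PowerBasis.ofAdjoinEqTop (hint a).tower_top hgen, PowerBasis.ofAdjoinEqTop_gen _ _⟩
  have hBint : IsIntegral R B.gen := hB ▸ hint a
  rw [← minpoly.algebraMap_eq (FaithfulSMul.algebraMap_injective S L), ← hB] at hf
  rw [mem_conductor_iff] at hx ⊢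
  intro z
  rw [← algebraMap_mem_adjoin_singleton_iff (A := L), ← hB]
  refine mem_adjoin_of_smul_prime_pow_smul_of_minpoly_isEisensteinAt (n := r) hπ hBint
    (hint (x * z)) ?_ hf
  rw [hB, Algebra.smul_def, IsScalarTower.algebraMap_apply R S L, ← map_mul, map_pow, ← mul_assoc,
    algebraMap_mem_adjoin_singleton_iff]
  exact hx z

end Conductor

section NumberField

open NumberField

variable {K : Type*} [Field K] [NumberField K] {a : 𝓞 K}

lemma norm_aeval_eq_resultant_minpoly (hgen : Algebra.adjoin ℚ {algebraMap (𝓞 K) K a} = ⊤)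
    (g : ℤ[X]) :
    Algebra.norm ℤ (aeval a g) = resultant (minpoly ℤ a) g := by
  have hint : IsIntegral ℤ a := Algebra.IsIntegral.isIntegral a
  obtain ⟨B, hB⟩ : ∃ B : PowerBasis ℚ K, B.gen = algebraMap (𝓞 K) K a :=
    ⟨PowerBasis.ofAdjoinEqTop (hint.algebraMap.tower_top) hgen, PowerBasis.ofAdjoinEqTop_gen _ _⟩
  have hmin : minpoly ℚ B.gen = (minpoly ℤ a).map (algebraMap ℤ ℚ) := by
    rw [hB, minpoly.isIntegrallyClosed_eq_field_fractions ℚ K hint]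
  have h := norm_aeval_gen_eq_resultant B (g.map (algebraMap ℤ ℚ))
  rw [hmin, resultant_map_of_monic (minpoly.monic hint), hB,
    aeval_map_algebraMap, aeval_algebraMap_apply] at h
  exact Int.cast_injective ((Algebra.coe_norm_int _).trans h)

lemma absNorm_conductor_mul_natAbs_discr (hgen : Algebra.adjoin ℚ {algebraMap (𝓞 K) K a} = ⊤) :
    Ideal.absNorm (conductor ℤ a) * (NumberField.discr K).natAbs = (minpoly ℤ a).discr.natAbs := by
  have hmonic : (minpoly ℤ a).Monic := minpoly.monic (Algebra.IsIntegral.isIntegral a)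
  rw [← NumberField.absNorm_differentIdeal K (𝓞 K), ← map_mul,
    conductor_mul_differentIdeal ℤ ℚ K a hgen, Ideal.absNorm_span_singleton,
    norm_aeval_eq_resultant_minpoly hgen, resultant_derivative_of_monic hmonic]
  simp [Int.natAbs_mul, Int.natAbs_pow]

lemma conductor_ne_bot (hgen : Algebra.adjoin ℚ {algebraMap (𝓞 K) K a} = ⊤) :
    conductor ℤ a ≠ ⊥ := by
  have hint : IsIntegral ℤ a := Algebra.IsIntegral.isIntegral a
  intro h
  have h0 := conductor_mul_differentIdeal ℤ ℚ K a hgen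
  rw [h, Ideal.bot_mul, eq_comm, Ideal.span_singleton_eq_bot] at h0
  have hsep : (minpoly ℚ (algebraMap (𝓞 K) K a)).Separable := Algebra.IsSeparable.isSeparable _ _
  refine hsep.aeval_derivative_ne_zero (S := K) (minpoly.aeval ℚ _) ?_
  rw [minpoly.isIntegrallyClosed_eq_field_fractions ℚ K hint, derivative_map,
    aeval_map_algebraMap, aeval_algebraMap_apply, h0, map_zero]

lemma not_dvd_absNorm_conductor {p : ℕ} (hp : p.Prime)
    (hgen : Algebra.adjoin ℚ {algebraMap (𝓞 K) K a} = ⊤)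
    (hf : (minpoly ℤ a).IsEisensteinAt (Ideal.span {(p : ℤ)})) :
    ¬ p ∣ Ideal.absNorm (conductor ℤ a) := by
  have h0 : Ideal.absNorm (conductor ℤ a) ≠ 0 :=
    Ideal.absNorm_eq_zero_iff.not.2 (conductor_ne_bot hgen)
  obtain ⟨r, m, hpm, hm⟩ := Nat.exists_eq_pow_mul_and_not_dvd h0 p hp.ne_one
  have hmem : (m : 𝓞 K) ∈ conductor ℤ a := by
    refine mem_conductor_of_pow_mul_mem (Nat.prime_iff_prime_int.1 hp) hgen hf (r := r) ?_
    simpa [hm] using Ideal.absNorm_mem (conductor ℤ a)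
  have hdvd : Ideal.absNorm (conductor ℤ a) ∣ m ^ Module.finrank ℤ (𝓞 K) := by
    rw [← Ideal.absNorm_span_natCast]
    exact Ideal.absNorm_dvd_absNorm_of_le ((Ideal.span_singleton_le_iff_mem _).2 hmem)
  exact fun h ↦ hpm (hp.dvd_of_dvd_pow (h.trans hdvd))

lemma pow_dvd_discr_iff_pow_dvd_discr_minpoly {p : ℕ} (hp : p.Prime)
    (hgen : Algebra.adjoin ℚ {algebraMap (𝓞 K) K a} = ⊤)
    (hf : (minpoly ℤ a).IsEisensteinAt (Ideal.span {(p : ℤ)})) (k : ℕ) :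
    (p : ℤ) ^ k ∣ NumberField.discr K ↔ (p : ℤ) ^ k ∣ (minpoly ℤ a).discr := by
  rw [← Int.natCast_pow, Int.natCast_dvd, Int.natCast_dvd,
    ← absNorm_conductor_mul_natAbs_discr hgen]
  exact ⟨fun h ↦ h.mul_left _,
    hp.prime.pow_dvd_of_dvd_mul_left k (not_dvd_absNorm_conductor hp hgen hf)⟩

end NumberField

/-- For a monic `p`-Eisenstein polynomial `f` of degree `n` with root `α` generating
`K = ℚ(α)`: if `p ∤ n` then `p^{n-1}` exactly divides `Δ(K)`, and if `p ∣ n` then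
`p^n ∣ Δ(K)`. -/
theorem eisenstein_field_discriminant (p : ℕ) (hp : Nat.Prime p)
    (f : Polynomial ℤ) (hmonic : f.Monic) (n : ℕ) (hn : f.natDegree = n)
    (heis : f.IsEisensteinAt (Ideal.span {(p : ℤ)}))
    (K : Type*) [Field K] [NumberField K] (α : K)
    (hroot : Polynomial.aeval α f = 0)
    (hgen : IntermediateField.adjoin ℚ {α} = ⊤) :
    (¬ p ∣ n →
      (p : ℤ) ^ (n - 1) ∣ NumberField.discr K ∧ ¬ (p : ℤ) ^ n ∣ NumberField.discr K) ∧
    (p ∣ n → (p : ℤ) ^ n ∣ NumberField.discr K) := by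
  subst hn
  have hpZ : Prime (p : ℤ) := Nat.prime_iff_prime_int.1 hp
  have hdeg : f.natDegree ≠ 0 := fun h ↦ by simp [hmonic.natDegree_eq_zero.1 h] at hroot
  have hirr : Irreducible f := heis.irreducible
    ((Ideal.span_singleton_prime hpZ.ne_zero).2 hpZ) hmonic.isPrimitive (Nat.pos_of_ne_zero hdeg)
  obtain ⟨a, rfl⟩ : ∃ a : NumberField.RingOfIntegers K, algebraMap _ K a = α :=
    ⟨⟨α, f, hmonic, hroot⟩, rfl⟩
  rw [aeval_algebraMap_eq_zero_iff] at hroot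
  have hmin : minpoly ℤ a = f := minpoly_eq_of_irreducible_of_monic hirr hmonic hroot
  have hadjoin : Algebra.adjoin ℚ {algebraMap _ K a} = ⊤ := by
    rw [← IntermediateField.adjoin_simple_toSubalgebra_of_isAlgebraic
      (Algebra.IsAlgebraic.isAlgebraic _), hgen, IntermediateField.top_toSubalgebra]
  have hdiscr (k : ℕ) : (p : ℤ) ^ k ∣ NumberField.discr K ↔ (p : ℤ) ^ k ∣ f.discr := by
    rw [pow_dvd_discr_iff_pow_dvd_discr_minpoly hp hadjoin (hmin ▸ heis), hmin]
  have hiff : (p : ℤ) ^ f.natDegree ∣ f.discr ↔ p ∣ f.natDegree :=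
    (pow_natDegree_dvd_discr_iff hpZ hmonic heis hdeg).trans Int.natCast_dvd_natCast
  rw [hdiscr, hdiscr, hiff]
  exact ⟨fun h ↦ ⟨pow_natDegree_sub_one_dvd_discr hpZ hmonic heis hdeg, h⟩, id⟩
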